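/- Let ξ ∈ C²(S¹;ℝ²) be a simple closed solution of the stationary equation ∂_s(σ∂_sξ) + ξ = 0 with |∂_s ξ| ≡ 1, σ > 0 solving ∂_{ss}σ − σ|∂_{ss}ξ|² = −1. If ∫₀¹ σ ds ≥ (27/32)·(1/(4π²)), then σ ≡ 1/(4π²) and ξ is the circle of radius 1/(2π) centered at the origin. -/

import Mathlib

open Real MeasureTheory intervalIntegral

noncomputable section

lemma sgn_near {v : ℝ → ℝ} {d x : ℝ} (h : HasDerivAt v d x) (hd : 0 < d) (hx : v x = 0) :
    ∃ δ > 0, (∀ y, x < y → y < x + δ → 0 < v y) ∧ (∀ y, x - δ < y → y < x → v y < 0) := by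
  have h1 := eventually_nhdsWithin_sign_eq_of_deriv_pos (f := v) (x₀ := x) (by rw [h.deriv]; exact hd) hx
  rw [Metric.eventually_nhds_iff] at h1
  obtain ⟨δ, hδ, H⟩ := h1
  refine ⟨δ, hδ, fun y h1 h2 => ?_, fun y h1 h2 => ?_⟩
  · have := H (y := y) (by rw [Real.dist_eq, abs_lt]; constructor <;> linarith)
    rw [sign_pos (by linarith : 0 < y - x)] at this
    exact sign_eq_one_iff.1 this
  · have := H (y := y) (by rw [Real.dist_eq, abs_lt]; constructor <;> linarith)
    rw [sign_neg (by linarith : y - x < 0)] at this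
    exact sign_eq_neg_one_iff.1 this

lemma deriv_le_of_left {v : ℝ → ℝ} {d a b : ℝ} (h : HasDerivAt v d b) (hab : a < b) (hb : v b = 0)
    (hp : ∀ x ∈ Set.Ioo a b, 0 < v x) : d ≤ 0 := by
  by_contra hd
  push Not at hd
  obtain ⟨δ, hδ, -, H⟩ := sgn_near h hd hb
  obtain ⟨y, hy1, hy2⟩ := exists_between (max_lt hab (by linarith : b - δ < b))
  have := max_lt_iff.1 hy1
  linarith [H y this.2 hy2, hp y ⟨this.1, hy2⟩]

section sturm
variable {σ σ1 φ : ℝ → ℝ} {c : ℝ}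

lemma gapA (hc : 0 < c) (hpos : ∀ s, 0 < σ s) (h1 : ∀ s, HasDerivAt σ (σ1 s) s)
    (h2 : ∀ s, HasDerivAt σ1 (c^2 / σ s^3 - 1) s) (hφ : ∀ s, HasDerivAt φ (c / σ s^2) s)
    {a b ε : ℝ} (hab : a < b) (ha : σ1 a = 0) (hb : σ1 b = 0)
    (hs : ∀ x ∈ Set.Ioo a b, 0 < ε * σ1 x) : φ b - φ a < π := by
  by_contra hcon
  push Not at hcon
  have hφm : StrictMono φ := strictMono_of_deriv_pos (fun s => by
    rw [(hφ s).deriv]; have := hpos s; positivity)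
  have hφc : Continuous φ := continuous_iff_continuousAt.2 fun s => (hφ s).continuousAt
  obtain ⟨b', ⟨hb1, hb2⟩, hb'⟩ := intermediate_value_Icc hab.le hφc.continuousOn
    (show φ a + π ∈ Set.Icc (φ a) (φ b) from ⟨by linarith [pi_pos], by linarith⟩)
  have hab' : a < b' := by
    rw [← hφm.lt_iff_lt]; linarith [pi_pos]
  have hW : ∀ s, HasDerivAt (fun s => ε * (c * σ1 s * cos (φ s - φ a)
      + (σ s^2 - c^2 / σ s) * sin (φ s - φ a))) (ε * (2 * σ s * σ1 s * sin (φ s - φ a))) s := by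
    intro s
    have hp := (hpos s).ne'
    have e1 := ((hφ s).sub_const (φ a))
    have := ((((h2 s).const_mul c).mul e1.cos).add
      ((((h1 s).pow 2).sub ((hasDerivAt_const s (c^2)).div (h1 s) hp)).mul e1.sin)).const_mul ε
    refine this.congr_deriv ?_
    simp only [Pi.sub_apply, Pi.div_apply, Pi.pow_apply, Nat.cast_ofNat, Nat.add_one_sub_one, pow_one]
    field_simp
    ring
  have hm : StrictMonoOn (fun s => ε * (c * σ1 s * cos (φ s - φ a)
      + (σ s^2 - c^2 / σ s) * sin (φ s - φ a))) (Set.Icc a b') := by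
    apply strictMonoOn_of_deriv_pos (convex_Icc _ _)
    · exact fun s _ => (hW s).continuousAt.continuousWithinAt
    · intro s hs'
      rw [interior_Icc] at hs'
      rw [(hW s).deriv]
      have e1 := hφm hs'.1
      have e2 := hφm hs'.2
      have := sin_pos_of_pos_of_lt_pi (x := φ s - φ a) (by linarith) (by linarith)
      have e3 := hs s ⟨hs'.1, hs'.2.trans_le hb2⟩
      have e4 := hpos s
      have : 0 < (ε * σ1 s) * (2 * σ s * sin (φ s - φ a)) := by positivity
      linarith
  have := hm ⟨le_rfl, hab'.le⟩ ⟨hab'.le, le_rfl⟩ hab'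
  have e : φ b' - φ a = π := by linarith
  simp only [ha, sub_self, e, sin_zero, cos_pi, sin_pi] at this
  have h3 : 0 ≤ ε * σ1 b' := by
    rcases hb2.eq_or_lt with h | h
    · rw [h, hb]; simp
    · exact (hs b' ⟨hab', h⟩).le
  nlinarith [mul_nonneg h3 hc.le]

lemma gapB (hc : 0 < c) (hpos : ∀ s, 0 < σ s) (h1 : ∀ s, HasDerivAt σ (σ1 s) s)
    (h2 : ∀ s, HasDerivAt σ1 (c^2 / σ s^3 - 1) s) (hφ : ∀ s, HasDerivAt φ (c / σ s^2) s)
    {a b ε : ℝ} (hab : a < b) (ha : σ1 a = 0) (hb : σ1 b = 0)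
    (hs : ∀ x ∈ Set.Ioo a b, 0 < ε * σ1 x) : π / 2 < φ b - φ a := by
  by_contra hcon
  push Not at hcon
  have hφm : StrictMono φ := strictMono_of_deriv_pos (fun s => by
    rw [(hφ s).deriv]; have := hpos s; positivity)
  have hW : ∀ s, HasDerivAt (fun s => ε * (2 * σ1 s / σ s * cos (2 * (φ s - φ a))
      - (c^2 / σ s^2 - σ s - σ1 s^2) / c * sin (2 * (φ s - φ a))))
      (-(ε * σ1 s) * (sin (2 * (φ s - φ a)) / c)) s := by
    intro s
    have hp := (hpos s).ne'
    have e1 := ((hφ s).sub_const (φ a)).const_mul 2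
    have := (((((h2 s).const_mul 2).div (h1 s) hp).mul e1.cos).sub
      ((((((hasDerivAt_const s (c^2)).div ((h1 s).pow 2) (pow_ne_zero 2 hp)).sub (h1 s)).sub
        ((h2 s).pow 2)).div_const c).mul e1.sin)).const_mul ε
    refine this.congr_deriv ?_
    simp only [Pi.sub_apply, Pi.div_apply, Pi.pow_apply, Nat.cast_ofNat, Nat.add_one_sub_one, pow_one]
    field_simp
    ring
  have hm : StrictAntiOn (fun s => ε * (2 * σ1 s / σ s * cos (2 * (φ s - φ a))
      - (c^2 / σ s^2 - σ s - σ1 s^2) / c * sin (2 * (φ s - φ a)))) (Set.Icc a b) := by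
    apply strictAntiOn_of_deriv_neg (convex_Icc _ _)
    · exact fun s _ => (hW s).continuousAt.continuousWithinAt
    · intro s hs'
      rw [interior_Icc] at hs'
      rw [(hW s).deriv]
      have e1 := hφm hs'.1
      have e2 := hφm hs'.2
      have := sin_pos_of_pos_of_lt_pi (x := 2 * (φ s - φ a)) (by linarith) (by linarith)
      have e3 := hs s hs'
      have : 0 < (ε * σ1 s) * (sin (2 * (φ s - φ a)) / c) := by positivity
      linarith
  have := hm ⟨le_rfl, hab.le⟩ ⟨hab.le, le_rfl⟩ hab
  simp only [ha, hb, sub_self, mul_zero, sin_zero, zero_div, zero_mul] at this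
  have h3 := deriv_le_of_left ((h2 b).const_mul ε) hab (by simp [hb]) hs
  have h4 : 0 ≤ sin (2 * (φ b - φ a)) :=
    sin_nonneg_of_nonneg_of_le_pi (by linarith [hφm hab]) (by linarith)
  have hp := hpos b
  have h5 : ε * (0 - (c^2 / σ b^2 - σ b - 0^2) / c * sin (2 * (φ b - φ a)))
    = -(ε * (c^2 / σ b^3 - 1)) * (σ b / c * sin (2 * (φ b - φ a))) := by
    field_simp
    ring
  rw [h5] at this
  have h6 : 0 ≤ -(ε * (c^2 / σ b^3 - 1)) * (σ b / c * sin (2 * (φ b - φ a))) :=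
    mul_nonneg (by linarith) (by positivity)
  linarith

end sturm

section zeros
variable {v v' : ℝ → ℝ}

/-- two zeros with derivatives of the same sign have a zero between -/
lemma zero_between (hv : ∀ s, HasDerivAt v (v' s) s) {x y : ℝ} (hxy : x < y)
    (hx : v x = 0) (hy : v y = 0) (h : 0 < v' x * v' y) : ∃ z, x < z ∧ z < y ∧ v z = 0 := by
  have key : ∀ (w w' : ℝ → ℝ), (∀ s, HasDerivAt w (w' s) s) → w x = 0 → w y = 0 →
      0 < w' x → 0 < w' y → ∃ z, x < z ∧ z < y ∧ w z = 0 := by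
    intro w w' hw wx wy px py
    obtain ⟨δ, hδ, H, -⟩ := sgn_near (hw x) px wx
    obtain ⟨δ', hδ', -, H'⟩ := sgn_near (hw y) py wy
    obtain ⟨m, hm1, hm2⟩ := exists_between hxy
    obtain ⟨p, hp1, hp2⟩ := exists_between (lt_min hm1 (by linarith : x < x + δ))
    obtain ⟨q, hq1, hq2⟩ := exists_between (max_lt hm2 (by linarith : y - δ' < y))
    rw [lt_min_iff] at hp2
    rw [max_lt_iff] at hq1
    have a1 := H p hp1 hp2.2
    have a2 := H' q hq1.2 hq2
    obtain ⟨z, ⟨hz1, hz2⟩, hz⟩ := intermediate_value_Icc' (by linarith [hp2.1, hq1.1] : p ≤ q)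
      (f := w) (fun s _ => (hw s).continuousAt.continuousWithinAt) ⟨a2.le, a1.le⟩
    exact ⟨z, by linarith, by linarith, hz⟩
  rcases pos_and_pos_or_neg_and_neg_of_mul_pos h with ⟨h1, h2⟩ | ⟨h1, h2⟩
  · exact key v v' hv hx hy h1 h2
  · obtain ⟨z, a, b, hz⟩ := key (fun s => - v s) (fun s => - v' s) (fun s => (hv s).neg)
      (by simp [hx]) (by simp [hy]) (by linarith) (by linarith)
    exact ⟨z, a, b, by simpa using hz⟩

lemma zeros_struct (hv : ∀ s, HasDerivAt v (v' s) s) (hnd : ∀ s, v s = 0 → v' s ≠ 0) {a b : ℝ}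
    (hab : a < b) (ha : v a = 0) (hb : v b = 0) (h : v' a = v' b) :
    (∃ z, a < z ∧ z < b ∧ v z = 0 ∧ (∀ x ∈ Set.Ioo a z, v x ≠ 0) ∧ (∀ x ∈ Set.Ioo z b, v x ≠ 0)) ∨
    (∃ x y z, a < x ∧ x < y ∧ y < z ∧ z < b ∧ v x = 0 ∧ v y = 0 ∧ v z = 0) := by
  have main : ∀ x y, a < x → x < y → y < b → v x = 0 → v y = 0 →
    (∃ x y z, a < x ∧ x < y ∧ y < z ∧ z < b ∧ v x = 0 ∧ v y = 0 ∧ v z = 0) := by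
    intro x y hax hxy hyb hx hy
    by_cases h1 : 0 < v' x * v' y
    · obtain ⟨z, z1, z2, hz⟩ := zero_between hv hxy hx hy h1
      exact ⟨x, z, y, hax, z1, z2, hyb, hx, hz, hy⟩
    by_cases h2 : 0 < v' a * v' x
    · obtain ⟨z, z1, z2, hz⟩ := zero_between hv hax ha hx h2
      exact ⟨z, x, y, z1, z2, hxy, hyb, hz, hx, hy⟩
    by_cases h3 : 0 < v' y * v' b
    · obtain ⟨z, z1, z2, hz⟩ := zero_between hv hyb hy hb h3
      exact ⟨x, y, z, hax, hxy, z1, z2, hx, hy, hz⟩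
    exfalso
    have n1 := hnd x hx
    have n2 := hnd y hy
    have n3 := hnd a ha
    rw [← h] at h3
    rcases lt_or_gt_of_ne n1 with n1 | n1 <;> rcases lt_or_gt_of_ne n2 with n2 | n2 <;>
      rcases lt_or_gt_of_ne n3 with n3 | n3 <;>
      first
        | exact h1 (mul_pos n1 n2)
        | exact h1 (mul_pos_of_neg_of_neg n1 n2)
        | exact h2 (mul_pos n3 n1)
        | exact h2 (mul_pos_of_neg_of_neg n3 n1)
        | exact h3 (mul_pos n2 n3)
        | exact h3 (mul_pos_of_neg_of_neg n2 n3)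
  obtain ⟨z, z1, z2, hz⟩ := zero_between hv hab ha hb (by
    rw [← h]; exact mul_self_pos.2 (hnd a ha))
  by_cases hA : ∃ x ∈ Set.Ioo a z, v x = 0
  · obtain ⟨x, hx, hx0⟩ := hA
    exact Or.inr (main x z hx.1 hx.2 z2 hx0 hz)
  by_cases hB : ∃ x ∈ Set.Ioo z b, v x = 0
  · obtain ⟨x, hx, hx0⟩ := hB
    exact Or.inr (main z x z1 hx.1 hx.2 hz hx0)
  push Not at hA hB
  exact Or.inl ⟨z, z1, z2, hz, hA, hB⟩

lemma const_sign (hv : Continuous v) {a b : ℝ} (h : ∀ x ∈ Set.Ioo a b, v x ≠ 0) :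
    ∃ ε : ℝ, ∀ x ∈ Set.Ioo a b, 0 < ε * v x := by
  by_cases hA : ∃ x ∈ Set.Ioo a b, 0 < v x
  · obtain ⟨x, hx, px⟩ := hA
    refine ⟨1, fun y hy => ?_⟩
    by_contra hn
    obtain ⟨z, hz, hz0⟩ := isPreconnected_Ioo.intermediate_value hy hx hv.continuousOn
      (⟨by linarith, px.le⟩ : (0:ℝ) ∈ Set.Icc (v y) (v x))
    exact h z hz hz0
  · push Not at hA
    exact ⟨-1, fun y hy => by have := lt_of_le_of_ne (hA y hy) (h y hy); linarith⟩

lemma next_zero (hv : ∀ s, HasDerivAt v (v' s) s) (hnd : ∀ s, v s = 0 → v' s ≠ 0) {a b : ℝ}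
    (hab : a < b) (ha : v a = 0) (hb : v b = 0) :
    ∃ z, a < z ∧ z ≤ b ∧ v z = 0 ∧ (∀ x ∈ Set.Ioo a z, v x ≠ 0) := by
  have hc : Continuous v := continuous_iff_continuousAt.2 fun s => (hv s).continuousAt
  obtain ⟨δ, hδ, H⟩ : ∃ δ > 0, ∀ y, a < y → y < a + δ → v y ≠ 0 := by
    rcases lt_or_gt_of_ne (hnd a ha) with h | h
    · obtain ⟨δ, hδ, H, -⟩ := sgn_near (v := fun s => - v s) (hv a).neg (by linarith) (by simp [ha])
      exact ⟨δ, hδ, fun y h1 h2 => by have := H y h1 h2; intro h; simp [h] at this⟩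
    · obtain ⟨δ, hδ, H, -⟩ := sgn_near (hv a) h ha
      exact ⟨δ, hδ, fun y h1 h2 => (H y h1 h2).ne'⟩
  have hbδ : a + δ ≤ b := by
    by_contra hn
    exact H b hab (by linarith) hb
  have hK : IsCompact (Set.Icc (a + δ) b ∩ v ⁻¹' {0}) :=
    isCompact_Icc.inter_right (isClosed_singleton.preimage hc)
  obtain ⟨z, hz, hl⟩ := hK.exists_isLeast ⟨b, ⟨hbδ, le_rfl⟩, hb⟩
  refine ⟨z, by linarith [hz.1.1], hz.1.2, hz.2, fun x hx hx0 => ?_⟩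
  by_cases hxd : x < a + δ
  · exact H x hx.1 hxd hx0
  · have := hl ⟨⟨not_lt.1 hxd, by linarith [hx.2, hz.1.2]⟩, hx0⟩
    linarith [hx.2]

end zeros

section core
variable {σ σ1 φ : ℝ → ℝ} {c : ℝ}

lemma sturm_main (hc : 0 < c) (hpos : ∀ s, 0 < σ s) (h1 : ∀ s, HasDerivAt σ (σ1 s) s)
    (h2 : ∀ s, HasDerivAt σ1 (c^2 / σ s^3 - 1) s) (hφ : ∀ s, HasDerivAt φ (c / σ s^2) s)
    (hper : ∀ s, σ (s + 1) = σ s) (hper1 : ∀ s, σ1 (s + 1) = σ1 s)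
    (htot : ∀ s, φ (s + 1) = φ s + 2 * π) : ∃ s, σ1 s = 0 ∧ c^2 / σ s^3 - 1 = 0 := by
  by_contra hnd
  push Not at hnd
  have hcont : Continuous σ1 := continuous_iff_continuousAt.2 fun s => (h2 s).continuousAt
  obtain ⟨a, -, ha⟩ := exists_hasDerivAt_eq_zero (f := σ) (f' := σ1) (a := 0) (b := 1) (by norm_num)
    (fun s _ => (h1 s).continuousAt.continuousWithinAt) (by have := hper 0; simp at this; exact this.symm)
    (fun s _ => h1 s)
  have hφm : StrictMono φ := strictMono_of_deriv_pos (fun s => by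
    rw [(hφ s).deriv]; have := hpos s; positivity)
  have gB : ∀ x y, x < y → σ1 x = 0 → σ1 y = 0 → π / 2 < φ y - φ x := by
    intro x y hxy hx hy
    obtain ⟨z, hz1, hz2, hz, hno⟩ := next_zero h2 hnd hxy hx hy
    obtain ⟨ε, hε⟩ := const_sign hcont hno
    have := gapB hc hpos h1 h2 hφ hz1 hx hz hε
    have := hφm.monotone hz2
    linarith
  have ha1 : σ1 (a + 1) = 0 := by rw [hper1, ha]
  rcases zeros_struct h2 hnd (by linarith : a < a + 1) ha ha1 (by rw [hper]) with
    ⟨z, z1, z2, hz, hA, hB⟩ | ⟨x, y, z, hax, hxy, hyz, hzb, hx, hy, hz⟩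
  · obtain ⟨ε, hε⟩ := const_sign hcont hA
    obtain ⟨ε', hε'⟩ := const_sign hcont hB
    have := gapA hc hpos h1 h2 hφ z1 ha hz hε
    have := gapA hc hpos h1 h2 hφ z2 hz ha1 hε'
    have := htot a
    linarith
  · have := gB _ _ hax ha hx
    have := gB _ _ hxy hx hy
    have := gB _ _ hyz hy hz
    have := gB _ _ hzb hz ha1
    have := htot a
    linarith

lemma energy (hpos : ∀ s, 0 < σ s) (h1 : ∀ s, HasDerivAt σ (σ1 s) s)
    (h2 : ∀ s, HasDerivAt σ1 (c^2 / σ s^3 - 1) s) (a b : ℝ) :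
    σ1 a^2 + c^2 / σ a^2 + 2 * σ a = σ1 b^2 + c^2 / σ b^2 + 2 * σ b := by
  have hd : ∀ s, HasDerivAt (fun s => σ1 s^2 + c^2 / σ s^2 + 2 * σ s) 0 s := by
    intro s
    have hp := (hpos s).ne'
    have := (((h2 s).pow 2).add ((hasDerivAt_const s (c^2)).div ((h1 s).pow 2)
      (pow_ne_zero 2 hp))).add ((h1 s).const_mul 2)
    refine this.congr_deriv ?_
    simp only [Pi.pow_apply, Nat.cast_ofNat, Nat.add_one_sub_one, pow_one]
    field_simp
    ring
  exact is_const_of_deriv_eq_zero (fun s => (hd s).differentiableAt) (fun s => (hd s).deriv) a b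

lemma const_of (hpos : ∀ s, 0 < σ s) (h1 : ∀ s, HasDerivAt σ (σ1 s) s)
    (h2 : ∀ s, HasDerivAt σ1 (c^2 / σ s^3 - 1) s) {a : ℝ} (ha : σ1 a = 0)
    (ha2 : c^2 / σ a^3 - 1 = 0) (s : ℝ) : σ1 s = 0 := by
  have he := energy hpos h1 h2 s a
  have hp := hpos s
  have hq := hpos a
  have hc2 : c^2 = σ a^3 := by
    field_simp at ha2; linarith
  rw [ha, hc2] at he
  have e : σ a ^ 3 / σ s ^2 + 2 * σ s - (σ a^3 / σ a^2 + 2 * σ a)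
      = (σ s - σ a)^2 * (2 * σ s + σ a) / σ s^2 := by
    field_simp
    ring
  have e2 : 0 ≤ (σ s - σ a)^2 * (2 * σ s + σ a) / σ s^2 := by positivity
  have : σ1 s^2 ≤ 0 := by linarith
  nlinarith [sq_nonneg (σ1 s), pow_eq_zero_iff (two_ne_zero) |>.1 (le_antisymm this (sq_nonneg (σ1 s)))]

variable {p q x y : ℝ → ℝ}

/-- The total rotation of a simple closed curve of this type is `2π`. -/
lemma total_rotation (hc : 0 < c) (hpos : ∀ s, 0 < σ s) (h1 : ∀ s, HasDerivAt σ (σ1 s) s)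
    (h2 : ∀ s, HasDerivAt σ1 (c^2 / σ s^3 - 1) s) (hφ : ∀ s, HasDerivAt φ (c / σ s^2) s)
    (hper : ∀ s, σ (s + 1) = σ s) (hper1 : ∀ s, σ1 (s + 1) = σ1 s) (h0 : φ 0 = 0)
    (hp : ∀ s, HasDerivAt p (-(c / σ s^2 * q s)) s) (hq : ∀ s, HasDerivAt q (c / σ s^2 * p s) s)
    (hpq : ∀ s, p s^2 + q s^2 = 1) (hpp : p 1 = p 0) (hqp : q 1 = q 0)
    (hx : ∀ s, x s = -σ1 s * p s + c / σ s * q s) (hy : ∀ s, y s = -σ1 s * q s - c / σ s * p s)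
    (hsimple : ∀ u v, u < v → v < u + 1 → x u = x v → y u = y v → False) :
    ∀ s, φ (s + 1) = φ s + 2 * π := by
  have hφm : StrictMono φ := strictMono_of_deriv_pos (fun s => by
    rw [(hφ s).deriv]; have := hpos s; positivity)
  have hφ1 : ∀ s, φ (s + 1) = φ s + φ 1 := by
    intro s
    have hd : ∀ s, HasDerivAt (fun s => φ (s + 1) - φ s) 0 s := by
      intro s
      have := ((hφ (s + 1)).comp_add_const s 1).sub (hφ s)
      refine this.congr_deriv ?_
      rw [hper]; ring
    have := is_const_of_deriv_eq_zero (fun s => (hd s).differentiableAt) (fun s => (hd s).deriv) s 0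
    simp [h0] at this
    linarith
  have hA : ∀ s, p s * cos (φ s) + q s * sin (φ s) = p 0 := by
    intro s
    have hd : ∀ s, HasDerivAt (fun s => p s * cos (φ s) + q s * sin (φ s)) 0 s := by
      intro s
      have := ((hp s).mul (hφ s).cos).add ((hq s).mul (hφ s).sin)
      refine this.congr_deriv ?_
      ring
    have := is_const_of_deriv_eq_zero (fun s => (hd s).differentiableAt) (fun s => (hd s).deriv) s 0
    simpa [h0] using this
  have hB : ∀ s, q s * cos (φ s) - p s * sin (φ s) = q 0 := by
    intro s
    have hd : ∀ s, HasDerivAt (fun s => q s * cos (φ s) - p s * sin (φ s)) 0 s := by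
      intro s
      have := ((hq s).mul (hφ s).cos).sub ((hp s).mul (hφ s).sin)
      refine this.congr_deriv ?_
      ring
    have := is_const_of_deriv_eq_zero (fun s => (hd s).differentiableAt) (fun s => (hd s).deriv) s 0
    simpa [h0] using this
  have hcos : cos (φ 1) = 1 := by
    have a1 := hA 1
    have a2 := hB 1
    rw [hpp, hqp] at a1 a2
    linear_combination (p 0) * a1 + (q 0) * a2 - (cos (φ 1) - 1) * hpq 0
  obtain ⟨m, hm⟩ := (Real.cos_eq_one_iff _).1 hcos
  have hφpos : 0 < φ 1 := by rw [← h0]; exact hφm one_pos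
  suffices hle : φ 1 ≤ 2 * π by
    have : m = 1 := by
      have b1 : (0:ℝ) < m := by
        by_contra hn
        push Not at hn
        nlinarith [pi_pos]
      have b2 : (m:ℝ) < 2 := by
        by_contra hn
        push Not at hn
        nlinarith [pi_pos]
      have b1' : 0 < m := by exact_mod_cast b1
      have b2' : m < 2 := by exact_mod_cast b2
      omega
    intro s
    rw [hφ1, ← hm, this]; simp
  by_contra hgt
  push Not at hgt
  -- polar angle
  set θ : ℝ → ℝ := fun s => φ s - arctan (σ s * σ1 s / c) with hθ
  have hθd : ∀ s, HasDerivAt θ (c / (σ s * (σ1 s^2 + c^2 / σ s^2))) s := by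
    intro s
    have hp' := hpos s
    have := (hφ s).sub ((((h1 s).mul (h2 s)).div_const c).arctan)
    refine this.congr_deriv ?_
    simp only [Pi.mul_apply]
    have n1 : c^2 + σ s^2 * σ1 s^2 ≠ 0 := by positivity
    have n2 : σ s^2 * σ1 s^2 + c^2 ≠ 0 := by positivity
    field_simp
    ring
  have hθm : StrictMono θ := strictMono_of_deriv_pos (fun s => by
    rw [(hθd s).deriv]; have := hpos s; positivity)
  have hθc : Continuous θ := continuous_iff_continuousAt.2 fun s => (hθd s).continuousAt
  have hθ1 : ∀ s, θ (s + 1) = θ s + φ 1 := by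
    intro s; simp only [hθ, hper, hper1, hφ1]; ring
  have hφc : Continuous φ := continuous_iff_continuousAt.2 fun s => (hφ s).continuousAt
  have hθn : ∀ n : ℕ, θ n = θ 0 + n * φ 1 ∧ θ (-(n:ℝ)) = θ 0 - n * φ 1 := by
    intro n
    induction n with
    | zero => simp
    | succ k ih =>
      refine ⟨by push_cast; rw [hθ1, ih.1]; ring, ?_⟩
      have := hθ1 (-((k + 1 : ℕ) : ℝ))
      have e : -((k + 1 : ℕ) : ℝ) + 1 = -(k : ℝ) := by push_cast; ring
      rw [e, ih.2] at this
      push_cast at this ⊢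
      linarith
  have hsurj : Function.Surjective θ := by
    intro t
    obtain ⟨n, hn⟩ := exists_nat_ge (|t - θ 0| / φ 1)
    rw [div_le_iff₀ hφpos] at hn
    have := abs_le.1 hn
    obtain ⟨z, -, hz⟩ := intermediate_value_Icc (a := -(n:ℝ)) (b := n)
      (by have : (0:ℝ) ≤ n := by positivity
          linarith) hθc.continuousOn
      (⟨by linarith [(hθn n).2], by linarith [(hθn n).1]⟩ : t ∈ Set.Icc _ _)
    exact ⟨z, hz⟩
  let Θ : ℝ ≃o ℝ := hθm.orderIsoOfSurjective θ hsurj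
  have hΘ : ∀ s, Θ s = θ s := fun s => rfl
  let S : ℝ → ℝ := fun s => Θ.symm (θ s + 2 * π)
  have hS : ∀ s, θ (S s) = θ s + 2 * π := fun s => by rw [← hΘ (S s)]; simp [S]
  have hSc : Continuous S := Θ.symm.continuous.comp (hθc.add continuous_const)
  have hS1 : ∀ s, s < S s := fun s => by rw [← hθm.lt_iff_lt, hS]; linarith [pi_pos]
  have hS2 : ∀ s, S s < s + 1 := fun s => by rw [← hθm.lt_iff_lt, hS, hθ1]; linarith
  have hσc : Continuous σ := continuous_iff_continuousAt.2 fun s => (h1 s).continuousAt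
  obtain ⟨M, hM⟩ : ∃ M, ∀ s, σ s ≤ σ M := by
    obtain ⟨M, -, hM⟩ := isCompact_Icc.exists_isMaxOn (⟨0, by simp⟩ : (Set.Icc (0:ℝ) 1).Nonempty)
      hσc.continuousOn
    refine ⟨M, fun s => ?_⟩
    have hP : Function.Periodic σ 1 := hper
    have e := hP.sub_int_mul_eq (x := s) ⌊s⌋
    rw [mul_one] at e
    rw [← e]
    exact hM ⟨by linarith [Int.floor_le s], by linarith [Int.lt_floor_add_one s]⟩
  obtain ⟨N, hN⟩ : ∃ N, S N = M := by
    obtain ⟨N, hN⟩ := hsurj (θ M - 2 * π)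
    exact ⟨N, hθm.injective (by rw [hS, hN]; ring)⟩
  obtain ⟨u, hu⟩ : ∃ u, σ (S u) - σ u = 0 := by
    have := mem_range_of_exists_le_of_exists_ge ((hσc.comp hSc).sub hσc) (c := (0:ℝ))
      ⟨M, by simp; exact hM _⟩ ⟨N, by simp [hN]; exact hM _⟩
    obtain ⟨u, hu⟩ := this
    exact ⟨u, hu⟩
  have hform : ∀ s, x s = c / σ s * √(1 + (σ s * σ1 s / c)^2) * (p 0 * sin (θ s) + q 0 * cos (θ s)) ∧
      y s = - (c / σ s * √(1 + (σ s * σ1 s / c)^2) * (p 0 * cos (θ s) - q 0 * sin (θ s))) := by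
    intro s
    have hsq : √(1 + (σ s * σ1 s / c)^2) ≠ 0 := by positivity
    have es : √(1 + (σ s * σ1 s / c)^2) * sin (θ s) = sin (φ s) - (σ s * σ1 s / c) * cos (φ s) := by
      simp only [hθ, sin_sub, sin_arctan, cos_arctan]
      field_simp
    have ec : √(1 + (σ s * σ1 s / c)^2) * cos (θ s) = cos (φ s) + (σ s * σ1 s / c) * sin (φ s) := by
      simp only [hθ, cos_sub, sin_arctan, cos_arctan]
      field_simp
    have ep : p s = p 0 * cos (φ s) - q 0 * sin (φ s) := by
      linear_combination cos (φ s) * hA s - sin (φ s) * hB s - p s * (sin_sq_add_cos_sq (φ s))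
    have eq : q s = p 0 * sin (φ s) + q 0 * cos (φ s) := by
      linear_combination sin (φ s) * hA s + cos (φ s) * hB s - q s * (sin_sq_add_cos_sq (φ s))
    have hp' := (hpos s).ne'
    constructor
    · have : c / σ s * √(1 + (σ s * σ1 s / c)^2) * (p 0 * sin (θ s) + q 0 * cos (θ s))
        = c / σ s * (p 0 * (√(1 + (σ s * σ1 s / c)^2) * sin (θ s)) +
          q 0 * (√(1 + (σ s * σ1 s / c)^2) * cos (θ s))) := by ring
      rw [this, es, ec, hx, ep, eq]
      field_simp
      ring
    · have : c / σ s * √(1 + (σ s * σ1 s / c)^2) * (p 0 * cos (θ s) - q 0 * sin (θ s))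
        = c / σ s * (p 0 * (√(1 + (σ s * σ1 s / c)^2) * cos (θ s)) -
          q 0 * (√(1 + (σ s * σ1 s / c)^2) * sin (θ s))) := by ring
      rw [this, es, ec, hy, ep, eq]
      field_simp
      ring
  have hσu : σ (S u) = σ u := by linarith
  have hen := energy hpos h1 h2 (S u) u
  rw [hσu] at hen
  have hsq : σ1 (S u)^2 = σ1 u^2 := by linarith
  have ht : (σ (S u) * σ1 (S u) / c)^2 = (σ u * σ1 u / c)^2 := by
    rw [hσu, div_pow, mul_pow, hsq]; ring
  refine hsimple u (S u) (hS1 u) (hS2 u) ?_ ?_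
  · rw [(hform u).1, (hform (S u)).1, ht, hσu, hS, sin_add_two_pi, cos_add_two_pi]
  · rw [(hform u).2, (hform (S u)).2, ht, hσu, hS, sin_add_two_pi, cos_add_two_pi]

lemma core (hc : 0 < c) (hpos : ∀ s, 0 < σ s) (h1 : ∀ s, HasDerivAt σ (σ1 s) s)
    (h2 : ∀ s, HasDerivAt σ1 (c^2 / σ s^3 - 1) s)
    (hper : ∀ s, σ (s + 1) = σ s) (hper1 : ∀ s, σ1 (s + 1) = σ1 s)
    (hp : ∀ s, HasDerivAt p (-(c / σ s^2 * q s)) s) (hq : ∀ s, HasDerivAt q (c / σ s^2 * p s) s)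
    (hpq : ∀ s, p s^2 + q s^2 = 1) (hpp : p 1 = p 0) (hqp : q 1 = q 0)
    (hx : ∀ s, x s = -σ1 s * p s + c / σ s * q s) (hy : ∀ s, y s = -σ1 s * q s - c / σ s * p s)
    (hsimple : ∀ u v, u < v → v < u + 1 → x u = x v → y u = y v → False) (s : ℝ) :
    σ s = 1 / (4 * π^2) ∧ x s^2 + y s^2 = (1 / (2 * π))^2 := by
  have hσc : Continuous σ := continuous_iff_continuousAt.2 fun s => (h1 s).continuousAt
  have hkc : Continuous fun s => c / σ s^2 :=
    continuous_const.div (hσc.pow 2) (fun s => (pow_pos (hpos s) 2).ne')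
  have hφ : ∀ s, HasDerivAt (fun s => ∫ t in (0:ℝ)..s, c / σ t^2) (c / σ s^2) s := fun s =>
    integral_hasDerivAt_right (hkc.intervalIntegrable _ _) hkc.aestronglyMeasurable.stronglyMeasurableAtFilter
      hkc.continuousAt
  have hrot := total_rotation hc hpos h1 h2 hφ hper hper1 (by simp) hp hq hpq hpp hqp hx hy hsimple
  obtain ⟨a, ha, ha2⟩ := sturm_main hc hpos h1 h2 hφ hper hper1 hrot
  have hz := const_of hpos h1 h2 ha ha2
  have hcst : ∀ t, σ t = σ s := fun t =>
    is_const_of_deriv_eq_zero (fun s => (h1 s).differentiableAt) (fun s => by rw [(h1 s).deriv, hz]) t s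
  have hr := hrot 0
  simp [hcst] at hr
  have hps := hpos s
  rw [hcst a] at ha2
  have hc2 : c^2 = σ s^3 := by
    field_simp at ha2; linarith
  have hc3 : c = 2 * π * σ s^2 := by
    field_simp at hr; linarith
  have hσ : σ s = 1 / (4 * π^2) := by
    have : σ s^3 * (4 * π^2 * σ s - 1) = 0 := by
      rw [hc3] at hc2; linear_combination hc2
    have := (mul_eq_zero.1 this).resolve_left (by positivity)
    field_simp
    linarith
  refine ⟨hσ, ?_⟩
  rw [hx, hy, hz]
  have : (-0 * p s + c / σ s * q s)^2 + (-0 * q s - c / σ s * p s)^2 = c^2 / σ s^2 := by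
    have := hpq s
    field_simp
    linear_combination c^2 * this
  rw [this, hc2]
  have : σ s^3 / σ s^2 = σ s := by field_simp
  rw [this, hσ]
  ring

end core

/-- Rigidity of stationary solutions: a simple closed stationary curve with
`∫σ ≥ (27/32)·(1/4π²)` is the circle of radius `1/(2π)` centered at the origin,
with `σ ≡ 1/(4π²)`. -/
theorem stmt15
    (ξ : ℝ → EuclideanSpace ℝ (Fin 2)) (σ : ℝ → ℝ)
    (hξ : ContDiff ℝ 2 ξ) (hσ : ContDiff ℝ 2 σ)
    (hperξ : Function.Periodic ξ 1) (hperσ : Function.Periodic σ 1)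
    (hσpos : ∀ s, 0 < σ s)
    (hspeed : ∀ s, ‖deriv ξ s‖ = 1)
    (hstat : ∀ s, deriv (fun r => σ r • deriv ξ r) s + ξ s = 0)
    (hmult : ∀ s, deriv (deriv σ) s - σ s * ‖deriv (deriv ξ) s‖ ^ 2 = -1)
    (hsimple : ∀ s₁ ∈ Set.Ico (0:ℝ) 1, ∀ s₂ ∈ Set.Ico (0:ℝ) 1, ξ s₁ = ξ s₂ → s₁ = s₂)
    (hσlarge : (27/32) * (1 / (4 * π ^ 2)) ≤ ∫ s in (0:ℝ)..1, σ s) :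
    (∀ s, σ s = 1 / (4 * π ^ 2)) ∧ (∀ s, ‖ξ s‖ = 1 / (2 * π)) := by
  have dξ : ∀ s, HasDerivAt ξ (deriv ξ s) s := fun s =>
    (hξ.differentiable (by norm_num) s).hasDerivAt
  have dσ : ∀ s, HasDerivAt σ (deriv σ s) s := fun s =>
    (hσ.differentiable (by norm_num) s).hasDerivAt
  have dT : ∀ s, HasDerivAt (deriv ξ) (deriv (deriv ξ) s) s := fun s => by
    have h : ContDiff ℝ (1 : ℕ) (deriv^[1] ξ) := ContDiff.iterate_deriv' 1 1 hξ
    exact (h.differentiable (by norm_num) s).hasDerivAt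
  have dσ1 : ∀ s, HasDerivAt (deriv σ) (deriv (deriv σ) s) s := fun s => by
    have h : ContDiff ℝ (1 : ℕ) (deriv^[1] σ) := ContDiff.iterate_deriv' 1 1 hσ
    exact (h.differentiable (by norm_num) s).hasDerivAt
  have coord : ∀ (i : Fin 2) (f : ℝ → EuclideanSpace ℝ (Fin 2)) (f' : EuclideanSpace ℝ (Fin 2)) (s : ℝ),
      HasDerivAt f f' s → HasDerivAt (fun r => f r i) (f' i) s := fun i f f' s h =>
    (EuclideanSpace.proj i : EuclideanSpace ℝ (Fin 2) →L[ℝ] ℝ).hasFDerivAt.comp_hasDerivAt s h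
  have hst : ∀ s i, deriv σ s * deriv ξ s i + σ s * deriv (deriv ξ) s i + ξ s i = 0 := by
    intro s i
    have h := hstat s
    have e : deriv (fun r => σ r • deriv ξ r) s = σ s • deriv (deriv ξ) s + deriv σ s • deriv ξ s :=
      ((dσ s).smul (dT s)).deriv
    rw [e] at h
    have := congrArg (fun v : EuclideanSpace ℝ (Fin 2) => v i) h
    simp at this
    linarith
  have hn : ∀ v : EuclideanSpace ℝ (Fin 2), ‖v‖^2 = v 0^2 + v 1^2 := by
    intro v
    rw [EuclideanSpace.norm_sq_eq]; simp
  have hpq : ∀ s, deriv ξ s 0^2 + deriv ξ s 1^2 = 1 := fun s => by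
    rw [← hn, hspeed]; norm_num
  have hdot : ∀ s, deriv ξ s 0 * deriv (deriv ξ) s 0 + deriv ξ s 1 * deriv (deriv ξ) s 1 = 0 := by
    intro s
    have h := ((coord 0 _ _ s (dT s)).pow 2).add ((coord 1 _ _ s (dT s)).pow 2)
    have h' : HasDerivAt (fun r => deriv ξ r 0^2 + deriv ξ r 1^2) 0 s := by
      simp only [hpq]; exact hasDerivAt_const _ _
    have := h'.unique h
    simp at this
    linarith
  have hcc : ∀ s, σ s * (ξ s 0 * deriv ξ s 1 - ξ s 1 * deriv ξ s 0)
      = σ 0 * (ξ 0 0 * deriv ξ 0 1 - ξ 0 1 * deriv ξ 0 0) := by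
    intro s
    have hd : ∀ s, HasDerivAt (fun s => σ s * (ξ s 0 * deriv ξ s 1 - ξ s 1 * deriv ξ s 0)) 0 s := by
      intro s
      have := (dσ s).mul (((coord 0 _ _ s (dξ s)).mul (coord 1 _ _ s (dT s))).sub
        ((coord 1 _ _ s (dξ s)).mul (coord 0 _ _ s (dT s))))
      refine this.congr_deriv ?_
      simp only [Pi.sub_apply, Pi.mul_apply]
      linear_combination ξ s 0 * hst s 1 - ξ s 1 * hst s 0
    exact is_const_of_deriv_eq_zero (fun s => (hd s).differentiableAt) (fun s => (hd s).deriv) s 0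
  obtain ⟨c, hc⟩ : ∃ c, ∀ s, σ s * (ξ s 0 * deriv ξ s 1 - ξ s 1 * deriv ξ s 0) = c := ⟨_, hcc⟩
  have hk : ∀ s, deriv ξ s 0 * deriv (deriv ξ) s 1 - deriv ξ s 1 * deriv (deriv ξ) s 0
      = c / σ s^2 := by
    intro s
    have hp := (hσpos s).ne'
    rw [eq_div_iff (pow_ne_zero 2 hp), ← hc s]
    linear_combination σ s * deriv ξ s 0 * hst s 1 - σ s * deriv ξ s 1 * hst s 0
  have hP : ∀ s, deriv (deriv ξ) s 0 = -(c / σ s^2 * deriv ξ s 1) := by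
    intro s
    linear_combination deriv ξ s 0 * hdot s - deriv ξ s 1 * hk s - deriv (deriv ξ) s 0 * hpq s
  have hQ : ∀ s, deriv (deriv ξ) s 1 = c / σ s^2 * deriv ξ s 0 := by
    intro s
    linear_combination deriv ξ s 1 * hdot s + deriv ξ s 0 * hk s - deriv (deriv ξ) s 1 * hpq s
  have hs2 : ∀ s, deriv (deriv σ) s = c^2 / σ s^3 - 1 := by
    intro s
    have h := hmult s
    have hp := (hσpos s).ne'
    rw [hn, hP, hQ] at h
    have e : σ s * ((-(c / σ s^2 * deriv ξ s 1))^2 + (c / σ s^2 * deriv ξ s 0)^2) = c^2 / σ s^3 := by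
      have := hpq s
      field_simp
      linear_combination c^2 * this
    rw [e] at h
    linarith
  have hx : ∀ s, ξ s 0 = -deriv σ s * deriv ξ s 0 + c / σ s * deriv ξ s 1 := by
    intro s
    have h := hst s 0
    have hp := (hσpos s).ne'
    rw [hP] at h
    have e : σ s * -(c / σ s^2 * deriv ξ s 1) = -(c / σ s * deriv ξ s 1) := by field_simp
    rw [e] at h
    linarith
  have hy : ∀ s, ξ s 1 = -deriv σ s * deriv ξ s 1 - c / σ s * deriv ξ s 0 := by
    intro s
    have h := hst s 1
    have hp := (hσpos s).ne'
    rw [hQ] at h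
    have e : σ s * (c / σ s^2 * deriv ξ s 0) = c / σ s * deriv ξ s 0 := by field_simp
    rw [e] at h
    linarith
  have d1 : ∀ s, HasDerivAt (deriv σ) (c^2 / σ s^3 - 1) s := fun s => hs2 s ▸ dσ1 s
  have dp : ∀ s, HasDerivAt (fun s => deriv ξ s 0) (-(c / σ s^2 * deriv ξ s 1)) s := fun s =>
    hP s ▸ coord 0 _ _ s (dT s)
  have dq : ∀ s, HasDerivAt (fun s => deriv ξ s 1) (c / σ s^2 * deriv ξ s 0) s := fun s =>
    hQ s ▸ coord 1 _ _ s (dT s)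
  have per1 : ∀ s, deriv σ (s + 1) = deriv σ s := by
    intro s
    rw [← deriv_comp_add_const]
    congr 1
    exact funext hperσ
  have perT : ∀ s, deriv ξ (s + 1) = deriv ξ s := by
    intro s
    rw [← deriv_comp_add_const]
    congr 1
    exact funext hperξ
  have perT0 : deriv ξ 1 = deriv ξ 0 := by simpa using perT 0
  have hsim : ∀ u v, u < v → v < u + 1 → ξ u 0 = ξ v 0 → ξ u 1 = ξ v 1 → False := by
    intro u v huv hvu e0 e1
    have e : ξ u = ξ v := by
      ext i; fin_cases i
      · exact e0
      · exact e1
    have fr : ∀ s, ξ (Int.fract s) = ξ s := fun s => by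
      have := hperξ.sub_int_mul_eq (x := s) ⌊s⌋
      rwa [mul_one] at this
    have h := hsimple (Int.fract u) ⟨Int.fract_nonneg u, Int.fract_lt_one u⟩ (Int.fract v)
      ⟨Int.fract_nonneg v, Int.fract_lt_one v⟩ (by rw [fr, fr, e])
    obtain ⟨z, hz⟩ := Int.fract_eq_fract.1 h
    have z1 : (z:ℝ) < 0 := by linarith
    have z2 : (-1:ℝ) < z := by linarith
    have z1' : z < 0 := by exact_mod_cast z1
    have z2' : -1 < z := by exact_mod_cast z2
    omega
  have fin : ∀ s, σ s = 1 / (4 * π^2) ∧ ξ s 0^2 + ξ s 1^2 = (1 / (2 * π))^2 := by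
    rcases lt_trichotomy c 0 with hc0 | hc0 | hc0
    · intro s
      have := core (c := -c) (σ := σ) (σ1 := deriv σ) (p := fun s => deriv ξ s 0)
        (q := fun s => -deriv ξ s 1) (x := fun s => ξ s 0) (y := fun s => - ξ s 1)
        (by linarith) hσpos dσ (fun s => by rw [neg_sq]; exact d1 s) hperσ per1
        (fun s => (dp s).congr_deriv (by ring)) (fun s => (dq s).neg.congr_deriv (by ring))
        (fun s => by simp only [neg_sq]; exact hpq s) (by simp only [perT0]) (by simp only [perT0])
        (fun s => by simp only [hx s]; ring) (fun s => by simp only [hy s]; ring)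
        (fun u v h1 h2 h3 h4 => hsim u v h1 h2 h3 (neg_injective h4)) s
      simpa only [neg_sq] using this
    · exfalso
      obtain ⟨a, -, ha⟩ := exists_hasDerivAt_eq_zero (f := deriv σ) (f' := fun s => c^2 / σ s^3 - 1)
        (a := 0) (b := 1) (by norm_num) (fun s _ => (d1 s).continuousAt.continuousWithinAt)
        (by simpa using (per1 0).symm) (fun s _ => d1 s)
      simp [hc0] at ha
    · exact fun s => core (c := c) (σ := σ) (σ1 := deriv σ) (p := fun s => deriv ξ s 0)
        (q := fun s => deriv ξ s 1) (x := fun s => ξ s 0) (y := fun s => ξ s 1)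
        hc0 hσpos dσ d1 hperσ per1 dp dq hpq (by simp only [perT0]) (by simp only [perT0])
        hx hy hsim s
  refine ⟨fun s => (fin s).1, fun s => ?_⟩
  have := (fin s).2
  rw [← hn] at this
  exact (pow_left_inj₀ (norm_nonneg _) (by positivity) two_ne_zero).1 this
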